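/- Let n ∈ ℕ, let (κ, k) be a pair of kernels from L_n, let φ ∈ C_{−1}(0,∞) and set f = k * φ. Then g := κ * f satisfies g(t) = (I₀₊ⁿ φ)(t) = ∫₀ᵗ ((t−τ)^{n−1}/(n−1)!) φ(τ) dτ for all t > 0; in particular g ∈ Cⁿ_{−1}(0,∞) and g^{(j)}(0+) = 0 for j = 0, 1, …, n−1. -/

import Mathlib

open Real MeasureTheory Set Filter Topology

/-- The Laplace convolution `(f * g)(t) = ∫₀ᵗ f(t-τ) g(τ) dτ`. -/
noncomputable def lconv (f g : ℝ → ℝ) : ℝ → ℝ :=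
  fun t => ∫ τ in (0:ℝ)..t, f (t - τ) * g τ

/-- The space `C_{-1}(0,∞)`: functions of the form `t^p f₁(t)` with `p > -1`
and `f₁` continuous on `[0,∞)`. -/
def Cm1 (f : ℝ → ℝ) : Prop :=
  ∃ p : ℝ, -1 < p ∧ ∃ f₁ : ℝ → ℝ, ContinuousOn f₁ (Set.Ici 0) ∧
    ∀ t : ℝ, 0 < t → f t = t ^ p * f₁ t

/-- The subspace `C_{-1,0}(0,∞)`: functions of the form `t^p f₁(t)` with `-1 < p < 0`
and `f₁` continuous on `[0,∞)`. -/
def Cm10 (f : ℝ → ℝ) : Prop :=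
  ∃ p : ℝ, -1 < p ∧ p < 0 ∧ ∃ f₁ : ℝ → ℝ, ContinuousOn f₁ (Set.Ici 0) ∧
    ∀ t : ℝ, 0 < t → f t = t ^ p * f₁ t


open scoped Convolution

/-- Working class: measurable, vanishing on the negative axis, locally power-bounded. -/
def WW (F : ℝ → ℝ) : Prop :=
  AEStronglyMeasurable F volume ∧ (∀ t ≤ 0, F t = 0) ∧
    ∀ T : ℝ, 0 < T → ∃ p : ℝ, -1 < p ∧ p < 0 ∧ ∃ C : ℝ, 0 ≤ C ∧
      ∀ t, 0 < t → t ≤ T → |F t| ≤ C * t ^ p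

lemma WW.norm {F : ℝ → ℝ} (h : WW F) : WW (fun x => ‖F x‖) := by
  refine ⟨h.1.norm, fun t ht => by simp [h.2.1 t ht], fun T hT => ?_⟩
  obtain ⟨p, h1, h2, C, h3, h4⟩ := h.2.2 T hT
  exact ⟨p, h1, h2, C, h3, fun t a b => by simpa using h4 t a b⟩

lemma pow_split {p q x τ : ℝ} (hp : p < 0) (hq : q < 0) (h0 : 0 < τ) (h1 : τ < x) :
    τ ^ p * (x - τ) ^ q ≤ (x / 2) ^ q * τ ^ p + (x / 2) ^ p * (x - τ) ^ q := by
  have hx : 0 < x / 2 := by linarith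
  have h2 : 0 < x - τ := by linarith
  have a1 := rpow_nonneg h0.le p
  have a2 := rpow_nonneg h2.le q
  have a3 := rpow_nonneg hx.le p
  have a4 := rpow_nonneg hx.le q
  rcases le_total τ (x / 2) with h | h
  · have := rpow_le_rpow_of_nonpos hx (by linarith : x / 2 ≤ x - τ) hq.le
    nlinarith [mul_le_mul_of_nonneg_left this a1, mul_nonneg a3 a2]
  · have := rpow_le_rpow_of_nonpos hx h hp.le
    nlinarith [mul_le_mul_of_nonneg_right this a2, mul_nonneg a4 a1]

lemma dom_int {p q x : ℝ} (hp : -1 < p) (hq : -1 < q) (A B : ℝ) :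
    IntervalIntegrable (fun τ => A * τ ^ p + B * (x - τ) ^ q) volume 0 x ∧
    ∫ τ in (0:ℝ)..x, (A * τ ^ p + B * (x - τ) ^ q)
      = A * (x ^ (p + 1) / (p + 1)) + B * (x ^ (q + 1) / (q + 1)) := by
  have i1 : IntervalIntegrable (fun τ : ℝ => τ ^ p) volume 0 x :=
    intervalIntegral.intervalIntegrable_rpow' hp
  have i2 : IntervalIntegrable (fun τ : ℝ => (x - τ) ^ q) volume 0 x := by
    have := (intervalIntegral.intervalIntegrable_rpow' (a := 0) (b := x) hq).comp_sub_left x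
    simpa using this.symm
  refine ⟨(i1.const_mul A).add (i2.const_mul B), ?_⟩
  rw [intervalIntegral.integral_add (i1.const_mul A) (i2.const_mul B),
    intervalIntegral.integral_const_mul, intervalIntegral.integral_const_mul,
    intervalIntegral.integral_comp_sub_left (fun u => u ^ q) x,
    integral_rpow (Or.inl hp), sub_self, sub_zero, integral_rpow (Or.inl hq),
    zero_rpow (by linarith), zero_rpow (by linarith), sub_zero, sub_zero]

lemma conv_dom {F G : ℝ → ℝ} (hF : WW F) (hG : WW G) {T : ℝ} (hT : 0 < T) :
    ∃ r : ℝ, -1 < r ∧ r < 0 ∧ ∃ K : ℝ, 0 ≤ K ∧ ∀ x, 0 < x → x ≤ T →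
      Integrable (fun τ => F τ * G (x - τ)) ∧ |∫ τ, F τ * G (x - τ)| ≤ K * x ^ r := by
  obtain ⟨p, hp, hp', C, hC, hFb⟩ := hF.2.2 T hT
  obtain ⟨q, hq, hq', D, hD, hGb⟩ := hG.2.2 T hT
  set M : ℝ := C * D * ((1 / 2) ^ q / (p + 1) + (1 / 2) ^ p / (q + 1)) with hM
  have hM0 : 0 ≤ M := by
    have : 0 < p + 1 := by linarith
    have : 0 < q + 1 := by linarith
    positivity
  set r := min (p + q + 1) (-1 / 2) with hr
  refine ⟨r, lt_min (by linarith) (by norm_num), (min_le_right _ _).trans_lt (by norm_num),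
    M * T ^ (p + q + 1 - r), by positivity, fun x hx hxT => ?_⟩
  have hdom := dom_int (x := x) hp hq (C * D * (x / 2) ^ q) (C * D * (x / 2) ^ p)
  have hI : Integrable ((Ioc 0 x).indicator
      (fun τ => C * D * (x / 2) ^ q * τ ^ p + C * D * (x / 2) ^ p * (x - τ) ^ q)) := by
    rw [integrable_indicator_iff measurableSet_Ioc]
    exact (intervalIntegrable_iff_integrableOn_Ioc_of_le hx.le).1 hdom.1
  have hle : ∀ τ, ‖F τ * G (x - τ)‖ ≤ (Ioc 0 x).indicator
      (fun τ => C * D * (x / 2) ^ q * τ ^ p + C * D * (x / 2) ^ p * (x - τ) ^ q) τ := by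
    intro τ
    have hnn : 0 ≤ (Ioc 0 x).indicator
      (fun τ => C * D * (x / 2) ^ q * τ ^ p + C * D * (x / 2) ^ p * (x - τ) ^ q) τ := by
      apply indicator_nonneg
      intro s hs
      have := rpow_nonneg hs.1.le p
      have := rpow_nonneg (sub_nonneg.2 hs.2) q
      positivity
    rcases le_or_gt τ 0 with h | h
    · rw [hF.2.1 τ h]; simpa using hnn
    rcases le_or_gt x τ with h' | h'
    · rw [hG.2.1 (x - τ) (by linarith)]; simpa using hnn
    rw [indicator_of_mem (by exact ⟨h, h'.le⟩), norm_mul]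
    have b1 := hFb τ h (by linarith)
    have b2 := hGb (x - τ) (by linarith) (by linarith)
    calc ‖F τ‖ * ‖G (x - τ)‖ ≤ (C * τ ^ p) * (D * (x - τ) ^ q) :=
          mul_le_mul b1 b2 (norm_nonneg _) (by have := rpow_nonneg h.le p; positivity)
      _ = C * D * (τ ^ p * (x - τ) ^ q) := by ring
      _ ≤ C * D * ((x / 2) ^ q * τ ^ p + (x / 2) ^ p * (x - τ) ^ q) :=
          mul_le_mul_of_nonneg_left (pow_split hp' hq' h h') (by positivity)
      _ = _ := by ring
  have hmeas : AEStronglyMeasurable (fun τ => F τ * G (x - τ)) volume :=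
    hF.1.mul (hG.1.comp_quasiMeasurePreserving
      (Measure.measurePreserving_sub_left volume x).quasiMeasurePreserving)
  refine ⟨hI.mono' hmeas (Eventually.of_forall hle), ?_⟩
  have h1 := norm_integral_le_of_norm_le hI (Eventually.of_forall hle)
  rw [integral_indicator measurableSet_Ioc, ← intervalIntegral.integral_of_le hx.le, hdom.2] at h1
  refine h1.trans ?_
  have e1 : C * D * (x / 2) ^ q * (x ^ (p + 1) / (p + 1))
      + C * D * (x / 2) ^ p * (x ^ (q + 1) / (q + 1)) = M * x ^ (p + q + 1) := by
    have z1 : x / 2 = x * (1 / 2) := by ring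
    rw [z1, mul_rpow hx.le (by norm_num), mul_rpow hx.le (by norm_num)]
    have w1 : x ^ (p + q + 1) = x ^ q * x ^ (p + 1) := by rw [← rpow_add hx]; ring_nf
    have w2 : x ^ q * x ^ (p + 1) = x ^ p * x ^ (q + 1) := by
      rw [← rpow_add hx, ← rpow_add hx]; ring_nf
    calc _ = C * D * ((x ^ q * x ^ (p + 1)) * ((1 / 2) ^ q / (p + 1))
            + (x ^ p * x ^ (q + 1)) * ((1 / 2) ^ p / (q + 1))) := by ring
      _ = _ := by rw [← w2, w1, hM]; ring
  rw [e1]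
  have e2 : x ^ (p + q + 1) = x ^ (p + q + 1 - r) * x ^ r := by rw [← rpow_add hx]; ring_nf
  have e3 : x ^ (p + q + 1 - r) ≤ T ^ (p + q + 1 - r) :=
    rpow_le_rpow hx.le hxT (sub_nonneg.2 (min_le_left _ _))
  rw [e2, ← mul_assoc]
  have := rpow_nonneg hx.le r
  gcongr

lemma prod_zero {F G : ℝ → ℝ} (hF : WW F) (hG : WW G) {x : ℝ} (hx : x ≤ 0) :
    (fun τ => F τ * G (x - τ)) = fun _ => 0 := by
  funext τ
  rcases le_or_gt τ 0 with h | h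
  · simp [hF.2.1 τ h]
  · simp [hG.2.1 (x - τ) (by linarith)]

lemma conv_exists {F G : ℝ → ℝ} (hF : WW F) (hG : WW G) (x : ℝ) :
    ConvolutionExistsAt F G x (ContinuousLinearMap.mul ℝ ℝ) volume := by
  show Integrable (fun τ => F τ * G (x - τ))
  rcases le_or_gt x 0 with h | h
  · rw [prod_zero hF hG h]; simp
  · obtain ⟨r, _, _, K, _, H⟩ := conv_dom hF hG h
    exact (H x h le_rfl).1

lemma conv_WW {F G : ℝ → ℝ} (hF : WW F) (hG : WW G) :
    WW (F ⋆[ContinuousLinearMap.mul ℝ ℝ, volume] G) := by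
  refine ⟨?_, ?_, ?_⟩
  · exact (hF.1.convolution_integrand (ContinuousLinearMap.mul ℝ ℝ) (μ := volume)
      hG.1).integral_prod_right'
  · intro t ht
    show ∫ τ, F τ * G (t - τ) = 0
    rw [prod_zero hF hG ht]; simp
  · intro T hT
    obtain ⟨r, h1, h2, K, h3, H⟩ := conv_dom hF hG hT
    exact ⟨r, h1, h2, K, h3, fun t a b => (H t a b).2⟩

lemma conv_assoc {F G H : ℝ → ℝ} (hF : WW F) (hG : WW G) (hH : WW H) (x : ℝ) :
    ((F ⋆[ContinuousLinearMap.mul ℝ ℝ, volume] G) ⋆[ContinuousLinearMap.mul ℝ ℝ, volume] H) x =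
    (F ⋆[ContinuousLinearMap.mul ℝ ℝ, volume] (G ⋆[ContinuousLinearMap.mul ℝ ℝ, volume] H)) x := by
  apply convolution_assoc _ _ _ _ (fun x y z => by simp [mul_assoc]) hF.1 hG.1 hH.1
  · exact Eventually.of_forall fun y => conv_exists hF hG y
  · exact Eventually.of_forall fun y => conv_exists hG.norm hH.norm y
  · exact conv_exists hF.norm (conv_WW hG.norm hH.norm) x

/-- Extension by zero. -/
noncomputable def ZZ (f : ℝ → ℝ) : ℝ → ℝ := (Ioi 0).indicator f

lemma ZZ_pos (f : ℝ → ℝ) {t : ℝ} (h : 0 < t) : ZZ f t = f t := indicator_of_mem (by exact h) f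

lemma ZZ_neg (f : ℝ → ℝ) {t : ℝ} (h : t ≤ 0) : ZZ f t = 0 :=
  indicator_of_notMem (by simpa using h) f

lemma Cm1.toCm10 {f : ℝ → ℝ} (h : Cm1 f) : Cm10 f := by
  obtain ⟨p, hp, f₁, hc, hf⟩ := h
  rcases lt_or_ge p 0 with h | h
  · exact ⟨p, hp, h, f₁, hc, hf⟩
  · refine ⟨-1 / 2, by norm_num, by norm_num, fun t => t ^ (p + 1 / 2) * f₁ t, ?_, fun t ht => ?_⟩
    · exact (continuous_rpow_const (by linarith)).continuousOn.mul hc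
    · rw [hf t ht, ← mul_assoc, ← rpow_add ht]; ring_nf

lemma Cm1.cont {f : ℝ → ℝ} (h : Cm1 f) : ContinuousOn f (Ioi 0) := by
  obtain ⟨p, hp, f₁, hc, hf⟩ := h
  have : ContinuousOn (fun t => t ^ p * f₁ t) (Ioi 0) := by
    apply ContinuousOn.mul
    · exact fun t ht => (continuousAt_rpow_const t p (Or.inl (ne_of_gt ht))).continuousWithinAt
    · exact hc.mono Ioi_subset_Ici_self
  exact this.congr fun t ht => hf t ht

lemma Cm1.WW {f : ℝ → ℝ} (h : Cm1 f) : WW (ZZ f) := by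
  refine ⟨?_, fun t ht => ZZ_neg f ht, fun T hT => ?_⟩
  · exact (aestronglyMeasurable_indicator_iff measurableSet_Ioi).2
      (h.cont.aestronglyMeasurable measurableSet_Ioi)
  · obtain ⟨p, hp, hp', f₁, hc, hf⟩ := h.toCm10
    obtain ⟨C, hC⟩ := isCompact_Icc.exists_bound_of_continuousOn
      (hc.mono (Icc_subset_Ici_self : Icc 0 T ⊆ Ici 0))
    refine ⟨p, hp, hp', C, (norm_nonneg _).trans (hC 0 ⟨le_rfl, hT.le⟩), fun t h0 h1 => ?_⟩
    rw [ZZ_pos f h0, hf t h0, abs_mul, abs_of_nonneg (rpow_nonneg h0.le p), mul_comm]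
    exact mul_le_mul_of_nonneg_right (hC t ⟨h0.le, h1⟩) (rpow_nonneg h0.le p)

/-- `lconv` on positive times only sees positive values. -/
lemma lconv_congr {f f' g g' : ℝ → ℝ} {t : ℝ} (ht : 0 < t)
    (h1 : ∀ s, 0 < s → f s = f' s) (h2 : ∀ s, 0 < s → g s = g' s) :
    lconv f g t = lconv f' g' t := by
  unfold lconv
  rw [intervalIntegral.integral_of_le ht.le, intervalIntegral.integral_of_le ht.le,
    integral_Ioc_eq_integral_Ioo, integral_Ioc_eq_integral_Ioo]
  refine setIntegral_congr_fun measurableSet_Ioo fun s hs => ?_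
  show f (t - s) * g s = _
  rw [h1 _ (sub_pos.2 hs.2), h2 _ hs.1]

lemma lconv_eq {F G : ℝ → ℝ} (hF : ∀ t ≤ 0, F t = 0) (hG : ∀ t ≤ 0, G t = 0) {t : ℝ}
    (ht : 0 < t) :
    lconv F G t = (G ⋆[ContinuousLinearMap.mul ℝ ℝ, volume] F) t := by
  show lconv F G t = ∫ τ, G τ * F (t - τ)
  unfold lconv
  rw [intervalIntegral.integral_of_le ht.le, ← integral_indicator measurableSet_Ioc]
  congr 1
  funext τ
  by_cases h : τ ∈ Ioc 0 t
  · rw [indicator_of_mem h, mul_comm]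
  · rw [indicator_of_notMem h]
    rcases le_or_gt τ 0 with h' | h'
    · simp [hG τ h']
    · have : t < τ := not_le.1 fun hh => h ⟨h', hh⟩
      simp [hF (t - τ) (by linarith)]

lemma lconv_assoc {a b c : ℝ → ℝ} (ha : Cm1 a) (hb : Cm1 b) (hc : Cm1 c) {t : ℝ} (ht : 0 < t) :
    lconv a (lconv b c) t = lconv (lconv a b) c t := by
  have key : ∀ {f g : ℝ → ℝ}, Cm1 f → Cm1 g → ∀ s, 0 < s →
      lconv f g s = (ZZ g ⋆[ContinuousLinearMap.mul ℝ ℝ, volume] ZZ f) s := by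
    intro f g hf hg s hs
    rw [lconv_congr hs (fun s h => (ZZ_pos f h).symm) (fun s h => (ZZ_pos g h).symm)]
    exact lconv_eq hf.WW.2.1 hg.WW.2.1 hs
  rw [lconv_congr ht (fun s h => (ZZ_pos a h).symm) (key hb hc),
    lconv_congr (g := c) ht (key ha hb) (fun s h => (ZZ_pos c h).symm),
    lconv_eq ha.WW.2.1 (conv_WW hc.WW hb.WW).2.1 ht,
    lconv_eq (conv_WW hb.WW ha.WW).2.1 hc.WW.2.1 ht]
  exact conv_assoc hc.WW hb.WW ha.WW t

lemma Cm1.intervalIntegrable {f : ℝ → ℝ} (h : Cm1 f) {t : ℝ} (ht : 0 ≤ t) :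
    IntervalIntegrable f volume 0 t := by
  obtain ⟨p, hp, f₁, hc, hf⟩ := h
  have h1 : IntervalIntegrable (fun τ : ℝ => τ ^ p * f₁ τ) volume 0 t := by
    apply (intervalIntegral.intervalIntegrable_rpow' hp).mul_continuousOn
    rw [uIcc_of_le ht]
    exact hc.mono Icc_subset_Ici_self
  refine h1.congr ?_
  rw [uIoc_of_le ht]
  intro s hs
  exact (hf s hs.1).symm

/-- Iterated primitive. -/
noncomputable def HH (φ : ℝ → ℝ) : ℕ → ℝ → ℝ
  | 0 => φ
  | m + 1 => fun t => ∫ τ in (0:ℝ)..t, HH φ m τ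

lemma cont_Cm1 {f : ℝ → ℝ} (h : ContinuousOn f (Ici 0)) : Cm1 f :=
  ⟨0, by norm_num, f, h, fun t _ => by simp⟩

lemma prim_cont {f : ℝ → ℝ} (h : Cm1 f) :
    ContinuousOn (fun t => ∫ τ in (0:ℝ)..t, f τ) (Ici 0) := by
  intro t ht
  have ht' : (0:ℝ) ≤ t := ht
  have h1 := intervalIntegral.continuousOn_primitive_interval'
    (h.intervalIntegrable (by linarith : (0:ℝ) ≤ t + 1)) left_mem_uIcc
  rw [uIcc_of_le (by linarith)] at h1
  refine (h1 t ⟨ht', by linarith⟩).mono_of_mem_nhdsWithin ?_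
  filter_upwards [self_mem_nhdsWithin, mem_nhdsWithin_of_mem_nhds (Iio_mem_nhds (lt_add_one t))]
    with s h2 h3 using ⟨h2, le_of_lt h3⟩

lemma HH_Cm1 {φ : ℝ → ℝ} (h : Cm1 φ) : ∀ m, Cm1 (HH φ m)
  | 0 => h
  | m + 1 => cont_Cm1 (prim_cont (HH_Cm1 h m))

lemma HH_deriv {φ : ℝ → ℝ} (h : Cm1 φ) (m : ℕ) {t : ℝ} (ht : 0 < t) :
    HasDerivAt (HH φ (m + 1)) (HH φ m t) t := by
  have hc := (HH_Cm1 h m).cont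
  exact intervalIntegral.integral_hasDerivAt_right ((HH_Cm1 h m).intervalIntegrable ht.le)
    (hc.stronglyMeasurableAtFilter isOpen_Ioi t ht) (hc.continuousAt (Ioi_mem_nhds ht))

lemma HH_tendsto {φ : ℝ → ℝ} (h : Cm1 φ) (m : ℕ) :
    Tendsto (HH φ (m + 1)) (𝓝[>] 0) (𝓝 0) := by
  have h1 := (prim_cont (HH_Cm1 h m) 0 self_mem_Ici).mono (Ioi_subset_Ici_self)
  have h2 : Tendsto (HH φ (m + 1)) (𝓝[>] 0) (𝓝 (∫ τ in (0:ℝ)..0, HH φ m τ)) := h1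
  simpa using h2

lemma HH_eq {φ : ℝ → ℝ} (h : Cm1 φ) (m : ℕ) : ∀ t, 0 < t →
    HH φ (m + 1) t = lconv (fun s => s ^ m / m.factorial) φ t := by
  induction m with
  | zero => intro t _; simp [HH, lconv]
  | succ m ih =>
    intro t ht
    have c1 : Cm1 (fun _ => (1:ℝ)) := cont_Cm1 continuousOn_const
    have c2 : Cm1 (fun s : ℝ => s ^ m / m.factorial) :=
      cont_Cm1 (by fun_prop)
    have e1 : HH φ (m + 1 + 1) t = lconv (fun _ => 1) (HH φ (m + 1)) t := by
      simp [lconv, HH]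
    rw [e1, lconv_congr ht (fun _ _ => rfl) ih, lconv_assoc c1 c2 h ht]
    refine lconv_congr ht (fun s hs => ?_) (fun _ _ => rfl)
    simp only [lconv, one_mul, intervalIntegral.integral_div, integral_pow]
    rw [Nat.factorial_succ]
    push_cast
    field_simp
    simp

/-- For `(κ, k) ∈ L_n`, `φ ∈ C_{-1}(0,∞)` and `f = k * φ`, the function
`g = κ * f` equals the `n`-fold integral `I₀₊ⁿ φ` on `(0,∞)`; in particular
`g ∈ Cⁿ_{-1}(0,∞)` and `g^{(j)}(0+) = 0` for `j = 0, …, n-1`. -/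
theorem statement13 (n : ℕ) (hn : 1 ≤ n) (κ k : ℝ → ℝ)
    (hκ : Cm1 κ) (hk : Cm10 k)
    (hL : ∀ t : ℝ, 0 < t → lconv κ k t = t ^ (n - 1) / (n - 1).factorial)
    (φ f : ℝ → ℝ) (hφ : Cm1 φ)
    (hf : ∀ t : ℝ, 0 < t → f t = lconv k φ t) :
    (∀ t : ℝ, 0 < t →
        lconv κ f t = ∫ τ in (0:ℝ)..t, (t - τ) ^ (n - 1) / (n - 1).factorial * φ τ) ∧
      (∀ j < n, ∀ t : ℝ, 0 < t → DifferentiableAt ℝ (iteratedDeriv j (lconv κ f)) t) ∧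
      Cm1 (iteratedDeriv n (lconv κ f)) ∧
      ∀ j < n, Filter.Tendsto (iteratedDeriv j (lconv κ f))
        (nhdsWithin 0 (Set.Ioi 0)) (nhds 0) := by
  have hk1 : Cm1 k := by
    obtain ⟨p, h1, _, h2⟩ := hk
    exact ⟨p, h1, h2⟩
  have main : ∀ t : ℝ, 0 < t →
      lconv κ f t = lconv (fun s => s ^ (n - 1) / (n - 1).factorial) φ t := by
    intro t ht
    rw [lconv_congr ht (fun _ _ => rfl) hf, lconv_assoc hκ hk1 hφ ht]
    exact lconv_congr ht hL (fun _ _ => rfl)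
  have hit : ∀ j, j ≤ n → ∀ t : ℝ, 0 < t →
      iteratedDeriv j (lconv κ f) t = HH φ (n - j) t := by
    intro j
    induction j with
    | zero =>
      intro _ t ht
      rw [iteratedDeriv_zero, main t ht, ← HH_eq hφ (n - 1) t ht]
      congr 1; omega
    | succ j ih =>
      intro hj t ht
      rw [iteratedDeriv_succ]
      have he : iteratedDeriv j (lconv κ f) =ᶠ[𝓝 t] HH φ (n - (j + 1) + 1) := by
        filter_upwards [Ioi_mem_nhds ht] with s hs
        rw [ih (by omega) s hs]
        congr 1; omega
      rw [he.deriv_eq]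
      exact (HH_deriv hφ _ ht).deriv
  refine ⟨main, ?_, ?_, ?_⟩
  · intro j hj t ht
    have he : iteratedDeriv j (lconv κ f) =ᶠ[𝓝 t] HH φ (n - (j + 1) + 1) := by
      filter_upwards [Ioi_mem_nhds ht] with s hs
      rw [hit j hj.le s hs]
      congr 1; omega
    exact he.differentiableAt_iff.2 (HH_deriv hφ _ ht).differentiableAt
  · obtain ⟨p, hp, f₁, hc, h⟩ := hφ
    refine ⟨p, hp, f₁, hc, fun t ht => ?_⟩
    rw [hit n le_rfl t ht, Nat.sub_self]
    exact h t ht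
  · intro j hj
    refine (HH_tendsto hφ (n - (j + 1))).congr' ?_
    filter_upwards [self_mem_nhdsWithin] with s hs
    rw [hit j hj.le s hs]
    congr 1; omega
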